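/- Let G be a finite connected strongly symmetric simple graph on n vertices with E ≠ ∅, adjacency matrix Adj and common vertex degree d, and let c = 2/√3. Let L : ℝ → Matrix (Fin n) (Fin n) ℝ be a family of symmetric matrices, differentiable at ε = 0, such that: (1) every row of L(ε) sums to zero for all ε; (2) L(0) = c·(d·I − Adj); (3) for all ε, L(ε)_ij = 0 whenever i ≠ j and (i,j) ∉ E, and L(ε)_ij < 0 whenever (i,j) ∈ E and ε is in a neighborhood of 0; and (4) tr(L'(0)) = 0. Let J denote the n×n all-ones matrix. Then the function ε ↦ det(L(ε) + n⁻¹·J), which for ε near 0 equals the product of the nonzero eigenvalues of L(ε), has derivative zero at ε = 0. -/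

import Mathlib

open Matrix

/-- `alphaNum G s i j` is the number of neighbors `k` of `i` with `dist k j = s`. -/
noncomputable def alphaNum {V : Type*} (G : SimpleGraph V) (s : ℕ) (i j : V) : ℕ :=
  Set.ncard {k : V | G.Adj i k ∧ G.dist k j = s}

/-- A graph is strongly symmetric if `alphaNum G s i j` depends only on `s` and `dist i j`. -/
def StronglySymmetric {V : Type*} (G : SimpleGraph V) : Prop :=
  ∀ (s : ℕ) (i j v w : V), G.dist i j = G.dist v w → alphaNum G s i j = alphaNum G s v w

/-! By Jacobi's formula the derivative at `0` is `tr (adj M · L′(0))` with `M = L(0) + n⁻¹ J`.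

Strong symmetry makes the space of matrices whose entries depend only on the distance stable under
multiplication by `Adj`. Powers of `Adj` therefore lie in it, and they span it because `Adj ^ r`
vanishes beyond distance `r` but not at distance `r`: the space is the algebra `ℝ[Adj]`. It
contains `M`, hence also `adj M`, which is a polynomial in `M` even when `M` is singular.

So `adj M` is constant on the diagonal and constant on the edges. As `L′(0)` is supported there,
`tr (adj M · L′(0))` is a combination of the trace of `L′(0)` and the sum of its entries, and both
vanish. -/

section Adjugate

open Polynomial

variable {m R : Type*} [Fintype m] [DecidableEq m] [CommRing R]

theorem coeff_mem_of_coeff_mul_X_sub_C_mem {A σ : Type*} [Ring A] [SetLike σ A]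
    [NonUnitalSubsemiringClass σ A] {S : σ} {a : A} (ha : a ∈ S) {p : A[X]}
    (hp : ∀ k, (p * (X - C a)).coeff k ∈ S) (k : ℕ) : p.coeff k ∈ S := by
  rcases le_total k (p.natDegree + 1) with hk | hk
  · induction hk using Nat.decreasingInduction with
    | self => simp only [coeff_natDegree_succ_eq_zero, zero_mem]
    | of_succ k _ ih =>
      have hrec : p.coeff k = (p * (X - C a)).coeff (k + 1) + p.coeff (k + 1) * a := by
        rw [coeff_mul_X_sub_C, sub_add_cancel]
      exact hrec ▸ add_mem (hp _) (mul_mem ih ha)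
  · simp only [coeff_eq_zero_of_natDegree_lt hk, zero_mem]

theorem coeff_zero_matPolyEquiv_adjugate_charmatrix (M : Matrix m m R) :
    (matPolyEquiv (adjugate (charmatrix M))).coeff 0 = adjugate (-M) := by
  have hmap : constantCoeff.mapMatrix (charmatrix M) = -M := by
    ext i j
    simp [charmatrix_apply, diagonal_apply, apply_ite (coeff · 0)]
  rw [← hmap, ← RingHom.map_adjugate]
  ext i j
  simp only [matPolyEquiv_coeff_apply, RingHom.mapMatrix_apply, map_apply, constantCoeff_apply]

theorem adjugate_mem_adjoin_singleton (M : Matrix m m R) :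
    adjugate M ∈ Algebra.adjoin R {M} := by
  have hmul : matPolyEquiv (adjugate (charmatrix (-M))) * (X - C (-M)) =
      (charpoly (-M)).map (algebraMap R (Matrix m m R)) := by
    rw [← matPolyEquiv_charmatrix, ← map_mul, adjugate_mul, ← matPolyEquiv_smul_one, charpoly]
  have hcoeff : (matPolyEquiv (adjugate (charmatrix (-M)))).coeff 0 = adjugate M := by
    rw [coeff_zero_matPolyEquiv_adjugate_charmatrix, neg_neg]
  rw [← hcoeff]
  refine coeff_mem_of_coeff_mul_X_sub_C_mem
    (neg_mem (Algebra.self_mem_adjoin_singleton R M)) (fun k => ?_) 0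
  rw [hmul, coeff_map]
  exact algebraMap_mem _ _

theorem sum_det_updateRow_eq_trace_adjugate_mul (M N : Matrix m m R) :
    ∑ i, (M.updateRow i (N i)).det = (adjugate M * N).trace := by
  simp only [← cramer_transpose_apply, cramer_eq_adjugate_mulVec, ← adjugate_transpose,
    mulVec_transpose]
  exact trace_mul_comm N (adjugate M)

theorem hasDerivAt_det {𝕜 : Type*} [NontriviallyNormedField 𝕜] {M : 𝕜 → Matrix m m 𝕜}
    {M' : Matrix m m 𝕜} {x : 𝕜} (hM : ∀ i j, HasDerivAt (fun t => M t i j) (M' i j) x) :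
    HasDerivAt (fun t => (M t).det) (adjugate (M x) * M').trace x := by
  let detRows : ContinuousMultilinearMap 𝕜 (fun _ : m => m → 𝕜) 𝕜 :=
    ⟨detRowAlternating.toMultilinearMap, Continuous.matrix_det continuous_id⟩
  have hrows (i : m) : HasDerivAt (fun t => M t i) (M' i) x := hasDerivAt_pi.mpr (hM i)
  have hdet : HasDerivAt (fun t => (M t).det) _ x := (HasFDerivAt.multilinear_comp (f := detRows)
    fun i => (hrows i).hasFDerivAt).hasDerivAt
  convert hdet using 1
  rw [← sum_det_updateRow_eq_trace_adjugate_mul]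
  simp only [_root_.sum_apply, ContinuousLinearMap.comp_apply, one_smul,
    ContinuousLinearMap.toSpanSingleton_apply, ContinuousMultilinearMap.toContinuousLinearMap_apply]
  rfl

end Adjugate

section WalkCounts

variable {V R : Type*} [Fintype V] [DecidableEq V] {G : SimpleGraph V} [DecidableRel G.Adj]
  [Semiring R]

theorem adjMatrix_pow_apply_eq_zero_of_lt_dist {r : ℕ} {i j : V} (h : r < G.dist i j) :
    (G.adjMatrix R ^ r) i j = 0 := by
  have hempty : IsEmpty {p : G.Walk i j | p.length = r} :=
    ⟨fun p => h.not_ge (p.2 ▸ SimpleGraph.dist_le p.1)⟩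
  rw [SimpleGraph.adjMatrix_pow_apply_eq_card_walk, Fintype.card_eq_zero, Nat.cast_zero]

theorem adjMatrix_pow_dist_apply_ne_zero [CharZero R] (hconn : G.Connected) (i j : V) :
    (G.adjMatrix R ^ G.dist i j) i j ≠ 0 := by
  have hwalk : Nonempty {p : G.Walk i j | p.length = G.dist i j} :=
    nonempty_subtype.mpr (hconn.exists_walk_length_eq_dist i j)
  rw [SimpleGraph.adjMatrix_pow_apply_eq_card_walk, Nat.cast_ne_zero]
  exact Fintype.card_ne_zero

end WalkCounts

theorem count_map_dist_neighborFinset {V : Type*} {G : SimpleGraph V} (s : ℕ) (i j : V)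
    [Fintype (G.neighborSet i)] :
    ((G.neighborFinset i).val.map (G.dist · j)).count s = alphaNum G s i j := by
  have hcoe : {k | G.Adj i k ∧ G.dist k j = s} =
      ({k ∈ G.neighborFinset i | s = G.dist k j} : Finset V) := by
    ext k
    simp [eq_comm]
  rw [alphaNum, hcoe, Set.ncard_coe_finset, Multiset.count_map, Finset.card_def,
    Finset.filter_val]

/-- The matrices indexed by the vertices of `G` whose `(i, j)` entry depends only on the distance
from `i` to `j`; for a connected strongly symmetric graph, its Bose–Mesner algebra. -/
def distInvariant {V : Type*} (G : SimpleGraph V) (R : Type*) [Semiring R] :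
    Submodule R (Matrix V V R) where
  carrier := {B | ∀ ⦃i j v w⦄, G.dist i j = G.dist v w → B i j = B v w}
  add_mem' hA hB _ _ _ _ h := congrArg₂ (· + ·) (hA h) (hB h)
  zero_mem' _ _ _ _ _ := rfl
  smul_mem' c _ hB _ _ _ _ h := congrArg (c * ·) (hB h)

namespace distInvariant

variable {V R : Type*} {G : SimpleGraph V}

section Semiring

variable [Semiring R]

theorem exists_eq_apply_dist {B : Matrix V V R} (hB : B ∈ distInvariant G R) :
    ∃ f : ℕ → R, ∀ i j, B i j = f (G.dist i j) := by
  have hfactor : (fun p : V × V => B p.1 p.2).FactorsThrough fun p => G.dist p.1 p.2 :=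
    fun _ _ h => hB h
  obtain ⟨f, hf⟩ := (Function.factorsThrough_iff _).mp hfactor
  exact ⟨f, fun i j => congrFun hf (i, j)⟩

theorem const_mem (c : R) : (of fun _ _ => c) ∈ distInvariant G R :=
  fun _ _ _ _ _ => rfl

theorem one_mem [DecidableEq V] (hconn : G.Connected) :
    (1 : Matrix V V R) ∈ distInvariant G R := fun i j v w h => by
  have hdiag : i = j ↔ v = w := by rw [← hconn.dist_eq_zero_iff, h, hconn.dist_eq_zero_iff]
  simp only [one_apply, hdiag]

theorem adjMatrix_mem [DecidableRel G.Adj] :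
    G.adjMatrix R ∈ distInvariant G R := fun i j v w h => by
  simp only [SimpleGraph.adjMatrix_apply, ← SimpleGraph.dist_eq_one_iff_adj, h]

theorem adjMatrix_mul_mem [Fintype V] [DecidableRel G.Adj] (hsym : StronglySymmetric G)
    {B : Matrix V V R} (hB : B ∈ distInvariant G R) :
    G.adjMatrix R * B ∈ distInvariant G R := by
  obtain ⟨f, hf⟩ := exists_eq_apply_dist hB
  intro i j v w h
  have hdist : (G.neighborFinset i).val.map (G.dist · j) =
      (G.neighborFinset v).val.map (G.dist · w) := by
    ext s
    rw [count_map_dist_neighborFinset, count_map_dist_neighborFinset, hsym s i j v w h]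
  have hsum (i j : V) : (G.adjMatrix R * B) i j =
      (((G.neighborFinset i).val.map (G.dist · j)).map f).sum := by
    simp only [SimpleGraph.adjMatrix_mul_apply, hf, Multiset.map_map, Function.comp_def,
      Finset.sum_eq_multiset_sum]
  rw [hsum, hsum, hdist]

theorem adjMatrix_pow_mem [Fintype V] [DecidableEq V] [DecidableRel G.Adj] (hconn : G.Connected)
    (hsym : StronglySymmetric G) (r : ℕ) : G.adjMatrix R ^ r ∈ distInvariant G R := by
  induction r with
  | zero => exact pow_zero (G.adjMatrix R) ▸ one_mem hconn
  | succ r ih => exact pow_succ' (G.adjMatrix R) r ▸ adjMatrix_mul_mem hsym ih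

end Semiring

section BoseMesner

variable {K : Type*} [Field K] [CharZero K] [Fintype V] [DecidableEq V]

theorem mem_adjoin_adjMatrix_of_eq_zero_of_le_dist [DecidableRel G.Adj] (hconn : G.Connected)
    (hsym : StronglySymmetric G) (r : ℕ) {B : Matrix V V K} (hB : B ∈ distInvariant G K)
    (hzero : ∀ i j, r ≤ G.dist i j → B i j = 0) : B ∈ Algebra.adjoin K {G.adjMatrix K} := by
  induction r generalizing B with
  | zero =>
    have hB0 : B = 0 := Matrix.ext fun i j => hzero i j (Nat.zero_le _)
    exact hB0 ▸ zero_mem _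
  | succ r ih =>
    by_cases hr : ∃ a b, G.dist a b = r
    · obtain ⟨a, b, rfl⟩ := hr
      -- Subtract the multiple of `Adj ^ r` that cancels the entries of `B` at distance `r`.
      let P := G.adjMatrix K ^ G.dist a b
      let c := B a b / P a b
      have hP : P ∈ distInvariant G K := adjMatrix_pow_mem hconn hsym _
      have hrest : B - c • P ∈ Algebra.adjoin K {G.adjMatrix K} := by
        refine ih (sub_mem hB (Submodule.smul_mem _ _ hP)) fun i j hij => ?_
        rw [Matrix.sub_apply, Matrix.smul_apply, smul_eq_mul]
        rcases hij.eq_or_lt with heq | hlt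
        · have hPab : P a b ≠ 0 := adjMatrix_pow_dist_apply_ne_zero hconn a b
          rw [← hB heq, ← hP heq, div_mul_cancel₀ _ hPab, sub_self]
        · have hPij : P i j = 0 := adjMatrix_pow_apply_eq_zero_of_lt_dist hlt
          rw [hPij, hzero i j hlt, mul_zero, sub_zero]
      exact sub_add_cancel B (c • P) ▸ add_mem hrest
        (Subalgebra.smul_mem _ (pow_mem (Algebra.self_mem_adjoin_singleton K _) _) c)
    · exact ih hB fun i j hij => hzero i j (hij.lt_of_ne fun h => hr ⟨i, j, h.symm⟩)

theorem eq_adjoin_adjMatrix [DecidableRel G.Adj] (hconn : G.Connected)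
    (hsym : StronglySymmetric G) :
    distInvariant G K = (Algebra.adjoin K {G.adjMatrix K}).toSubmodule := by
  refine le_antisymm (fun B hB => ?_) ?_
  · obtain ⟨r, hr⟩ := (Set.finite_range fun p : V × V => G.dist p.1 p.2).bddAbove
    refine mem_adjoin_adjMatrix_of_eq_zero_of_le_dist hconn hsym (r + 1) hB fun i j hij => ?_
    exact absurd (hr ⟨(i, j), rfl⟩) (Nat.not_le.mpr hij)
  · rw [Algebra.adjoin_singleton_eq_range_aeval]
    rintro _ ⟨p, rfl⟩
    exact p.aeval_eq_sum_range (G.adjMatrix K) ▸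
      sum_mem fun r _ => Submodule.smul_mem _ _ (adjMatrix_pow_mem hconn hsym r)

theorem adjugate_mem (hconn : G.Connected) (hsym : StronglySymmetric G) {M : Matrix V V K}
    (hM : M ∈ distInvariant G K) : adjugate M ∈ distInvariant G K := by
  classical
  rw [eq_adjoin_adjMatrix hconn hsym] at hM ⊢
  exact Algebra.adjoin_singleton_le hM (adjugate_mem_adjoin_singleton M)

end BoseMesner

theorem trace_mul_eq_zero [Fintype V] [CommRing R] {B N : Matrix V V R}
    (hB : B ∈ distInvariant G R) (hsupp : ∀ i j, i ≠ j → ¬ G.Adj i j → N i j = 0)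
    (hsum : ∑ i, ∑ j, N i j = 0) (htr : N.trace = 0) : (B * N).trace = 0 := by
  classical
  obtain ⟨f, hf⟩ := exists_eq_apply_dist hB
  have hterm (i j : V) :
      N i j * B j i = f 1 * N i j + if i = j then (f 0 - f 1) * N i i else 0 := by
    rcases eq_or_ne i j with rfl | hij
    · rw [if_pos rfl, hf, SimpleGraph.dist_self]
      ring
    rw [if_neg hij, add_zero, mul_comm]
    by_cases hadj : G.Adj i j
    · rw [hf, SimpleGraph.dist_eq_one_iff_adj.mpr hadj.symm]
    · rw [hsupp i j hij hadj, mul_zero, mul_zero]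
  calc (B * N).trace = ∑ i, ∑ j, N i j * B j i := trace_mul_comm B N
    _ = f 1 * ∑ i, ∑ j, N i j + (f 0 - f 1) * N.trace := by
      simp only [hterm, Finset.sum_add_distrib, Finset.sum_ite_eq, Finset.mem_univ, if_true,
        ← Finset.mul_sum, trace, diag_apply]
    _ = 0 := by rw [hsum, htr, mul_zero, mul_zero, add_zero]

end distInvariant

section Derivative

variable {V 𝕜 : Type*} [Fintype V] [DecidableEq V] {G : SimpleGraph V}
  [NontriviallyNormedField 𝕜] [CharZero 𝕜]

theorem hasDerivAt_det_zero_of_mem_distInvariant (hconn : G.Connected)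
    (hsym : StronglySymmetric G) {M : 𝕜 → Matrix V V 𝕜} {M' : Matrix V V 𝕜} {x : 𝕜}
    (hM : ∀ i j, HasDerivAt (fun t => M t i j) (M' i j) x) (hMx : M x ∈ distInvariant G 𝕜)
    (hsupp : ∀ i j, i ≠ j → ¬ G.Adj i j → M' i j = 0) (hsum : ∑ i, ∑ j, M' i j = 0)
    (htr : M'.trace = 0) : HasDerivAt (fun t => (M t).det) 0 x := by
  have htrace : (adjugate (M x) * M').trace = 0 :=
    distInvariant.trace_mul_eq_zero (distInvariant.adjugate_mem hconn hsym hMx) hsupp hsum htr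
  exact htrace ▸ hasDerivAt_det hM

theorem deriv_det_modified_laplacian_symmetric_general (hconn : G.Connected)
    (hsym : StronglySymmetric G) {L : 𝕜 → Matrix V V 𝕜} {x : 𝕜}
    (hdiff : ∀ i j, DifferentiableAt 𝕜 (fun ε => L ε i j) x)
    (hrow : ∀ ε i, ∑ j, L ε i j = 0) (hLx : L x ∈ distInvariant G 𝕜)
    (hsupp : ∀ ε i j, i ≠ j → ¬ G.Adj i j → L ε i j = 0)
    (htr : trace (of fun i j => deriv (fun ε => L ε i j) x) = 0) (κ : 𝕜) :
    HasDerivAt (fun ε => (L ε + κ • of fun _ _ => (1 : 𝕜)).det) 0 x := by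
  have hderiv (i j : V) :
      HasDerivAt (fun ε => (L ε + κ • of fun _ _ => (1 : 𝕜) : Matrix V V 𝕜) i j)
        (deriv (fun ε => L ε i j) x) x :=
    (hdiff i j).hasDerivAt.add_const _
  refine hasDerivAt_det_zero_of_mem_distInvariant hconn hsym hderiv
    (add_mem hLx (Submodule.smul_mem _ κ (distInvariant.const_mem 1))) (fun i j hij hadj => ?_)
    (Finset.sum_eq_zero fun i _ => ?_) htr
  · simp only [hsupp _ i j hij hadj, deriv_const]
  · simp only [← deriv_fun_sum fun j _ => hdiff i j, hrow, deriv_const]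

end Derivative

/-- Let `G` be a finite connected strongly symmetric graph on `n` vertices with adjacency matrix
`Adj` and common degree `d`, and let `L(ε)` be a family of symmetric matrices, differentiable at
`ε = 0`, whose rows sum to zero, with `L(0) = (2/√3)·(d·I - Adj)` the cotan-Laplacian of the
equilateral triangulation on `G`, supported on the edges off the diagonal, with negative entries
on the edges near `ε = 0` and with `tr L'(0) = 0`. Then `ε ↦ det(L(ε) + n⁻¹ J)`, which near `0`
equals the product of the nonzero eigenvalues of `L(ε)`, has derivative zero at `ε = 0`. -/
theorem deriv_det_modified_laplacian_symmetric
    (n : ℕ) (G : SimpleGraph (Fin n)) [DecidableRel G.Adj]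
    (hconn : G.Connected) (hE : ∃ a b : Fin n, G.Adj a b)
    (hsym : StronglySymmetric G)
    (d : ℕ) (hd : ∀ i : Fin n, G.degree i = d)
    (L : ℝ → Matrix (Fin n) (Fin n) ℝ)
    (hsymm : ∀ ε : ℝ, (L ε).IsSymm)
    (hdiff : ∀ i j : Fin n, DifferentiableAt ℝ (fun ε => L ε i j) 0)
    (hrow : ∀ (ε : ℝ) (i : Fin n), ∑ j : Fin n, L ε i j = 0)
    (hL0 : L 0 = (2 / Real.sqrt 3) •
      ((d : ℝ) • (1 : Matrix (Fin n) (Fin n) ℝ) - G.adjMatrix ℝ))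
    (hsupp : ∀ (ε : ℝ) (i j : Fin n), i ≠ j → ¬ G.Adj i j → L ε i j = 0)
    (hneg : ∀ᶠ ε in nhds (0 : ℝ), ∀ i j : Fin n, G.Adj i j → L ε i j < 0)
    (htr : Matrix.trace (Matrix.of fun i j => deriv (fun ε => L ε i j) 0) = 0) :
    HasDerivAt
      (fun ε => Matrix.det
        (L ε + ((n : ℝ))⁻¹ • (Matrix.of fun _ _ => (1 : ℝ))))
      0 0 := by
  have hL0_mem : L 0 ∈ distInvariant G ℝ := hL0 ▸ Submodule.smul_mem _ _ (sub_mem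
    (Submodule.smul_mem _ _ (distInvariant.one_mem hconn)) distInvariant.adjMatrix_mem)
  exact deriv_det_modified_laplacian_symmetric_general hconn hsym hdiff hrow hL0_mem hsupp htr _
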